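/- arXiv:2504.11768 — 3 statements merged into one kernel-verified Lean document; each statement's English description precedes it below -/
import Mathlib

section
/- Let T be a compactly generated triangulated category with a generating sequence G, and suppose there is an integer A > 0 such that M^G_i ⊆ ∪_{|n|≤A} Σ^n M^G_{i+1} for every integer i. Then (1) for every integer i and every positive integer j, M^G_i ⊆ ∪_{|n|≤jA} Σ^n M^G_{i+j}; and (2) for every integer i, T^c = ∪_{n∈ℤ} Σ^n M^G_i. -/
namespace GApprox

open CategoryTheory CategoryTheory.Limits CategoryTheory.Pretriangulated

universe w v u

variable (C : Type u) [Category.{v} C] [HasZeroObject C] [HasShift C ℤ]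
  [Preadditive C] [∀ n : ℤ, (shiftFunctor C n).Additive] [Pretriangulated C]
  [HasCoproducts.{v} C]

/-- The right orthogonal of a class of objects. -/
def rOrth (A : Set C) : Set C := {X | ∀ a ∈ A, ∀ f : a ⟶ X, f = 0}

/-- The left orthogonal of a class of objects. -/
def lOrth (A : Set C) : Set C := {X | ∀ a ∈ A, ∀ f : X ⟶ a, f = 0}

/-- `Hom(A, B) = 0`. -/
def homZero (A B : Set C) : Prop := ∀ a ∈ A, ∀ b ∈ B, ∀ f : a ⟶ b, f = 0

/-- The star operation `A ⋆ B`: objects `Y` admitting a distinguished triangle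
`X ⟶ Y ⟶ Z ⟶ ΣX` with `X ∈ A` and `Z ∈ B`. -/
def starSet (A B : Set C) : Set C :=
  {Y | ∃ (X Z : C) (f : X ⟶ Y) (g : Y ⟶ Z) (h : Z ⟶ X⟦(1 : ℤ)⟧),
    Triangle.mk f g h ∈ (distTriang C) ∧ X ∈ A ∧ Z ∈ B}

/-- The (strictly full) shift `Σⁿ A` of a class of objects. -/
def shiftSet (n : ℤ) (A : Set C) : Set C :=
  {X | ∃ a ∈ A, Nonempty (X ≅ (shiftFunctor C n).obj a)}

/-- An object is compact if any map to a coproduct factors through a finite subcoproduct. -/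
def IsCompactObj (X : C) : Prop :=
  ∀ (α : Type v) (f : α → C) (g : X ⟶ ∐ f),
    ∃ (s : Finset α) (h : X ⟶ ∐ (fun i : {a : α // a ∈ s} => f i.1)),
      g = h ≫ Sigma.desc (fun i => Sigma.ι f i.1)

/-- The class of compact objects `T^c`. -/
def compacts : Set C := {X | IsCompactObj C X}

/-- The category is compactly generated. -/
def CompactlyGenerated : Prop :=
  ∀ X : C, (∀ K ∈ compacts C, ∀ f : K ⟶ X, f = 0) → IsZero X

/-- Closure under direct summands (retracts), `smd`. -/
def smd (A : Set C) : Set C :=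
  {X | ∃ Y ∈ A, ∃ (i : X ⟶ Y) (r : Y ⟶ X), i ≫ r = 𝟙 X}

/-- Closure of a class of objects under finite direct sums and extensions (`coprod`). -/
inductive extClosure (U : Set C) : C → Prop
  | of {X : C} : X ∈ U → extClosure U X
  | zero {X : C} : IsZero X → extClosure U X
  | ext {X Y Z : C} (f : X ⟶ Y) (g : Y ⟶ Z) (h : Z ⟶ X⟦(1 : ℤ)⟧) :
      Triangle.mk f g h ∈ (distTriang C) → extClosure U X → extClosure U Z → extClosure U Y

/-- Closure of a class of objects under arbitrary coproducts, extensions and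
direct summands. -/
inductive bigClosure (U : Set C) : C → Prop
  | of {X : C} : X ∈ U → bigClosure U X
  | zero {X : C} : IsZero X → bigClosure U X
  | coprod {α : Type v} (f : α → C) :
      (∀ i, bigClosure U (f i)) → ∀ {X : C}, (X ≅ ∐ f) → bigClosure U X
  | ext {X Y Z : C} (f : X ⟶ Y) (g : Y ⟶ Z) (h : Z ⟶ X⟦(1 : ℤ)⟧) :
      Triangle.mk f g h ∈ (distTriang C) → bigClosure U X → bigClosure U Z → bigClosure U Y
  | retract {X Y : C} (i : X ⟶ Y) (r : Y ⟶ X) :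
      i ≫ r = 𝟙 X → bigClosure U Y → bigClosure U X

/-- Closure of a class of objects under finite direct sums, `add`. -/
def addClosure (U : Set C) : Set C :=
  {X | ∃ (n : ℕ) (f : ULift.{v} (Fin n) → C), (∀ i, f i ∈ U) ∧ Nonempty (X ≅ ∐ f)}

/-- Closure of a class of objects under arbitrary coproducts, `Add`. -/
def bigAddClosure (U : Set C) : Set C :=
  {X | ∃ (α : Type v) (f : α → C), (∀ i, f i ∈ U) ∧ Nonempty (X ≅ ∐ f)}

/-- `coprod_n(U)`. -/
def coprodPow (U : Set C) : ℕ → Set C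
  | 0 => {X | IsZero X}
  | n + 1 => starSet C (addClosure C U) (coprodPow U n)

/-- `Coprod_n(U)`. -/
def coprodPowBig (U : Set C) : ℕ → Set C
  | 0 => {X | IsZero X}
  | n + 1 => starSet C (bigAddClosure C U) (coprodPowBig U n)

/-- `G[a,b] = ∪ { G^m : a ≤ m ≤ b }`. -/
def unionIcc (G : ℤ → Set C) (a b : ℤ) : Set C := ⋃ m ∈ Set.Icc a b, G m

/-- `G(-∞,b] = ∪ { G^m : m ≤ b }`. -/
def unionIic (G : ℤ → Set C) (b : ℤ) : Set C := ⋃ m ∈ Set.Iic b, G m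

/-- `G(-∞,∞) = ∪ { G^m : m ∈ ℤ }`. -/
def unionAll (G : ℤ → Set C) : Set C := ⋃ m : ℤ, G m

/-- `G^{[a,b]} = smd(coprod(G[a,b]))`. -/
def gInt (G : ℤ → Set C) (a b : ℤ) : Set C :=
  smd C {X | extClosure C (unionIcc C G a b) X}

/-- `G^{(-∞,b]} = smd(coprod(G(-∞,b]))`. -/
def gIic (G : ℤ → Set C) (b : ℤ) : Set C :=
  smd C {X | extClosure C (unionIic C G b) X}

/-- `G^{[a,b]}_k = smd(coprod_k(G[a,b]))`. -/
def gIntPow (G : ℤ → Set C) (a b k : ℤ) : Set C :=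
  smd C (coprodPow C (unionIcc C G a b) k.toNat)

/-- `Ḡ^{[a,b]}`. -/
def gBarInt (G : ℤ → Set C) (a b : ℤ) : Set C :=
  {X | bigClosure C (unionIcc C G a b) X}

/-- `Ḡ^{(-∞,b]}`. -/
def gBarIic (G : ℤ → Set C) (b : ℤ) : Set C :=
  {X | bigClosure C (unionIic C G b) X}

/-- `Ḡ^{[a,b]}_k = smd(Coprod_k(G[a,b]))`. -/
def gBarIntPow (G : ℤ → Set C) (a b k : ℤ) : Set C :=
  smd C (coprodPowBig C (unionIcc C G a b) k.toNat)

/-- `M^G_n := G^{(-∞,-n]}`. -/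
def MG (G : ℤ → Set C) (n : ℤ) : Set C := gIic C G (-n)

/-- `R^G_n := ⊥((M^G_n)^⊥)`, orthogonals taken in the whole category. -/
def RG (G : ℤ → Set C) (n : ℤ) : Set C := lOrth C (rOrth C (MG C G n))

/-- A pre-generating sequence. -/
structure IsPreGenSeq (G : ℤ → Set C) : Prop where
  compact : ∀ i : ℤ, G i ⊆ compacts C
  generates : smd C {X | extClosure C (unionAll C G) X} = compacts C

/-- A generating sequence. -/
structure IsGenSeq (G : ℤ → Set C) extends IsPreGenSeq C G : Prop where
  shift_cond : ∀ n : ℤ,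
    shiftSet C (-1) (G n) ∪ G n ∪ shiftSet C 1 (G n) ⊆ gInt C G (n - 1) (n + 1)

/-- A finite generating sequence. -/
structure IsFinGenSeq (G : ℤ → Set C) extends IsGenSeq C G : Prop where
  finite : ∀ i : ℤ, (G i).Finite

/-- ℕ-equivalence of generating sequences. -/
def GenSeqNEquiv (G G' : ℤ → Set C) : Prop :=
  ∃ N : ℤ, 0 ≤ N ∧ (∀ n : ℤ, G' n ⊆ gInt C G (n - N) (n + N)) ∧
    ∀ n : ℤ, G n ⊆ gInt C G' (n - N) (n + N)

/-- ℕ-equivalence of (extended good) metrics. -/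
def MetricNEquiv (M N : ℤ → Set C) : Prop :=
  ∃ n : ℤ, 0 ≤ n ∧ (∀ i : ℤ, M (i + n) ⊆ N i) ∧ ∀ i : ℤ, N (i + n) ⊆ M i

/-- An extended good metric. -/
structure IsExtGoodMetric (M : ℤ → Set C) : Prop where
  zero_mem : ∀ (n : ℤ) (X : C), IsZero X → X ∈ M n
  iso_closed : ∀ (n : ℤ) ⦃X Y : C⦄, (X ≅ Y) → X ∈ M n → Y ∈ M n
  star_subset : ∀ n : ℤ, starSet C (M n) (M n) ⊆ M n
  shift_one : ∀ n : ℤ, shiftSet C 1 (M (n + 1)) ⊆ M n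
  antitone : ∀ n : ℤ, M (n + 1) ⊆ M n
  shift_neg_one : ∀ n : ℤ, shiftSet C (-1) (M (n + 1)) ⊆ M n

/-- An orthogonal metric. -/
structure IsOrthMetric (M : ℤ → Set C) extends IsExtGoodMetric C M : Prop where
  orth : ∀ n : ℤ, lOrth C (rOrth C (M n)) = M n

/-- The closure of the compacts `T̄^c := ∩ₙ T^c ⋆ Rₙ`. -/
def closCompacts (Rm : ℤ → Set C) : Set C := ⋂ n : ℤ, starSet C (compacts C) (Rm n)

/-- `(T, R, A)` is `G`-preapproximable. -/
structure IsGPreApprox (G Rm : ℤ → Set C) (A : ℤ) : Prop where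
  orthMetric : IsOrthMetric C Rm
  A_pos : 0 < A
  cond0 : ∀ i : ℤ, MG C G i ⊆ ⋃ n ∈ {n : ℤ | |n| ≤ A}, shiftSet C n (MG C G (i + 1))
  cond1 : ∀ i : ℤ, MG C G (i + A) ⊆ Rm i ∩ compacts C
  cond2 : ∀ n : ℤ, ∃ N : ℤ, ∀ i : ℤ, N ≤ i → homZero C (G n) (Rm i)

/-- There is a distinguished triangle `E ⟶ F ⟶ D ⟶ ΣE` with `E ∈ S` and `D ∈ D`. -/
def approxTriangle (F : C) (S D : Set C) : Prop :=
  ∃ (E Dd : C) (f : E ⟶ F) (g : F ⟶ Dd) (h : Dd ⟶ E⟦(1 : ℤ)⟧),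
    Triangle.mk f g h ∈ (distTriang C) ∧ E ∈ S ∧ Dd ∈ D

/-- `(T, R, A)` is weakly `G`-approximable. -/
structure IsWeakGApprox (G Rm : ℤ → Set C) (A : ℤ) extends IsGPreApprox C G Rm A : Prop where
  hom_vanish : ∀ n i : ℤ, A ≤ n + i → homZero C (G n) (Rm i)
  approx : ∀ i : ℤ, ∀ F ∈ Rm i,
    approxTriangle C F (gBarInt C G (-A - i) (A - i)) (Rm (i + 1))

/-- `(T, R, A)` is `G`-approximable. -/
structure IsGApprox (G Rm : ℤ → Set C) (A : ℤ) extends IsWeakGApprox C G Rm A : Prop where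
  approx' : ∀ i : ℤ, ∀ F ∈ Rm i,
    approxTriangle C F (gBarIntPow C G (-A - i) (A - i) A) (Rm (i + 1))

/-- `(T, R, A)` is weakly `G`-quasiapproximable. -/
structure IsWeakGQuasiApprox (G Rm : ℤ → Set C) (A : ℤ) extends IsGPreApprox C G Rm A : Prop where
  hom_vanish : ∀ n i : ℤ, A ≤ n + i → homZero C (G n) (Rm i)
  approx : ∀ i : ℤ, ∀ F ∈ Rm i ∩ closCompacts C Rm,
    approxTriangle C F (gBarInt C G (-A - i) (A - i)) (Rm (i + 1) ∩ closCompacts C Rm)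

/-- `(T, R, A)` is `G`-quasiapproximable. -/
structure IsGQuasiApprox (G Rm : ℤ → Set C) (A : ℤ) extends IsWeakGQuasiApprox C G Rm A : Prop where
  approx' : ∀ i : ℤ, ∀ F ∈ Rm i ∩ closCompacts C Rm,
    approxTriangle C F (gBarIntPow C G (-A - i) (A - i) A) (Rm (i + 1) ∩ closCompacts C Rm)

/-- The coproduct of a sequence of objects. -/
noncomputable def seqCoprod (E : ℕ → C) : C := ∐ (fun n : ULift.{v} ℕ => E n.down)

/-- The canonical inclusion into the coproduct of a sequence. -/
noncomputable def seqInj (E : ℕ → C) (n : ℕ) : E n ⟶ seqCoprod C E :=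
  Sigma.ι (fun n : ULift.{v} ℕ => E n.down) (ULift.up n)

/-- The map `1 - shift` on the coproduct of a sequence. -/
noncomputable def oneMinusShift (E : ℕ → C) (e : ∀ n, E n ⟶ E (n + 1)) :
    seqCoprod C E ⟶ seqCoprod C E :=
  Sigma.desc (fun n => seqInj C E n.down - e n.down ≫ seqInj C E (n.down + 1))

/-- `H`, equipped with `π`, `δ`, is a homotopy colimit of the sequence `E`. -/
def IsHocolim (E : ℕ → C) (e : ∀ n, E n ⟶ E (n + 1)) (H : C)
    (π : seqCoprod C E ⟶ H) (δ : H ⟶ (seqCoprod C E)⟦(1 : ℤ)⟧) : Prop :=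
  Triangle.mk (oneMinusShift C E e) π δ ∈ (distTriang C)

/-- A single compact generator. -/
def IsCompactGenerator (G₀ : C) : Prop :=
  IsCompactObj C G₀ ∧ ∀ X : C, (∀ n : ℤ, ∀ f : (shiftFunctor C n).obj G₀ ⟶ X, f = 0) → IsZero X

/-- The strictly full subcategory `{Σʲ G₀}`. -/
def singletonShift (G₀ : C) (j : ℤ) : Set C :=
  {X | Nonempty (X ≅ (shiftFunctor C j).obj G₀)}

/-- The generating sequence `Gⁿ := {Σ⁻ⁿ G₀}`. -/
def genSeqNeg (G₀ : C) (n : ℤ) : Set C := singletonShift C G₀ (-n)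

/-- The generating sequence `Gⁿ := {Σⁿ G₀}`. -/
def genSeqPos (G₀ : C) (n : ℤ) : Set C := singletonShift C G₀ n

/-!
The hypothesis says that passing from `M^G_i` to `M^G_{i+1}` costs a shift of length at most `A`.
Shifts compose and their lengths add, so passing from `M^G_i` to `M^G_{i+j}` costs at most `j * A`.

An object built from `⋃ m, G^m` by finitely many extensions involves only finitely many of the
`G^m`, so `T^c` is the union of the `M^G_j`, and the first part moves each `M^G_j` into the shifts
of any fixed `M^G_i`. Conversely, a shift of a compact object is compact, because `Σⁿ` is left
adjoint to the coproduct-preserving functor `Σ⁻ⁿ`.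
-/

section Shifts

variable {𝒯 : Type u} [Category.{v} 𝒯] [HasShift 𝒯 ℤ]

lemma shiftSet_mono (n : ℤ) {S S' : Set 𝒯} (hS : S ⊆ S') : shiftSet 𝒯 n S ⊆ shiftSet 𝒯 n S' :=
  fun _ ⟨Y, hY, e⟩ ↦ ⟨Y, hS hY, e⟩

lemma subset_shiftSet_zero (S : Set 𝒯) : S ⊆ shiftSet 𝒯 0 S :=
  fun X hX ↦ ⟨X, hX, ⟨((shiftFunctorZero 𝒯 ℤ).app X).symm⟩⟩

lemma shiftSet_shiftSet (m n : ℤ) (S : Set 𝒯) :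
    shiftSet 𝒯 n (shiftSet 𝒯 m S) = shiftSet 𝒯 (m + n) S := by
  ext X
  constructor
  · rintro ⟨Y, ⟨Z, hZ, ⟨eYZ⟩⟩, ⟨eXY⟩⟩
    exact ⟨Z, hZ, ⟨eXY ≪≫ (shiftFunctor 𝒯 n).mapIso eYZ ≪≫
      ((shiftFunctorAdd 𝒯 m n).app Z).symm⟩⟩
  · rintro ⟨Z, hZ, ⟨e⟩⟩
    exact ⟨_, ⟨Z, hZ, ⟨Iso.refl _⟩⟩, ⟨e ≪≫ (shiftFunctorAdd 𝒯 m n).app Z⟩⟩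

/-- The union `⋃_{|n| ≤ A} Σⁿ S` of the shifts of a class `S` by at most `A` in either direction,
used to compare different members of a metric. It is empty if `A < 0`. -/
def boundedShifts (A : ℤ) (S : Set 𝒯) : Set 𝒯 := ⋃ n ∈ {n : ℤ | |n| ≤ A}, shiftSet 𝒯 n S

lemma mem_boundedShifts {A : ℤ} {S : Set 𝒯} {X : 𝒯} :
    X ∈ boundedShifts A S ↔ ∃ n : ℤ, |n| ≤ A ∧ X ∈ shiftSet 𝒯 n S := by
  simp only [boundedShifts, Set.mem_iUnion, Set.mem_ofPred_eq, exists_prop]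

lemma boundedShifts_mono (A : ℤ) {S S' : Set 𝒯} (hS : S ⊆ S') :
    boundedShifts A S ⊆ boundedShifts A S' :=
  Set.biUnion_mono subset_rfl fun n _ ↦ shiftSet_mono n hS

lemma boundedShifts_subset_iUnion (A : ℤ) (S : Set 𝒯) :
    boundedShifts A S ⊆ ⋃ n : ℤ, shiftSet 𝒯 n S :=
  Set.iUnion₂_subset fun n _ ↦ Set.subset_iUnion (fun n ↦ shiftSet 𝒯 n S) n

lemma subset_boundedShifts_zero (S : Set 𝒯) : S ⊆ boundedShifts 0 S :=
  fun _ hX ↦ mem_boundedShifts.2 ⟨0, abs_zero.le, subset_shiftSet_zero S hX⟩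

lemma boundedShifts_boundedShifts_subset (A B : ℤ) (S : Set 𝒯) :
    boundedShifts B (boundedShifts A S) ⊆ boundedShifts (B + A) S := by
  intro X hX
  obtain ⟨n, hn, Y, hY, e⟩ := mem_boundedShifts.1 hX
  obtain ⟨m, hm, hYm⟩ := mem_boundedShifts.1 hY
  have hXnm : X ∈ shiftSet 𝒯 (m + n) S := shiftSet_shiftSet m n S ▸ ⟨Y, hYm, e⟩
  exact mem_boundedShifts.2 ⟨m + n, by linarith [abs_add_le m n], hXnm⟩

variable {M : ℤ → Set 𝒯} {A : ℤ}

lemma subset_boundedShifts_nat_mul (h : ∀ i, M i ⊆ boundedShifts A (M (i + 1))) (i : ℤ) (k : ℕ) :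
    M i ⊆ boundedShifts (k * A) (M (i + k)) := by
  induction k with
  | zero => simpa using subset_boundedShifts_zero (M i)
  | succ k ih =>
    calc M i ⊆ boundedShifts (k * A) (M (i + k)) := ih
      _ ⊆ boundedShifts (k * A) (boundedShifts A (M (i + k + 1))) := boundedShifts_mono _ (h _)
      _ ⊆ boundedShifts (k * A + A) (M (i + k + 1)) := boundedShifts_boundedShifts_subset _ _ _
      _ = boundedShifts ((k + 1 : ℕ) * A) (M (i + (k + 1 : ℕ))) := by
        rw [Nat.cast_succ, add_one_mul, add_assoc i]

lemma iUnion_subset_iUnion_shiftSet (hM : Antitone M)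
    (h : ∀ i, M i ⊆ boundedShifts A (M (i + 1))) (i : ℤ) :
    ⋃ j, M j ⊆ ⋃ n : ℤ, shiftSet 𝒯 n (M i) := by
  refine Set.iUnion_subset fun j ↦ ?_
  let k := (i - j).toNat
  have hk : i ≤ j + k := by omega
  calc M j ⊆ boundedShifts (k * A) (M (j + k)) := subset_boundedShifts_nat_mul h j k
    _ ⊆ boundedShifts (k * A) (M i) := boundedShifts_mono _ (hM hk)
    _ ⊆ ⋃ n : ℤ, shiftSet 𝒯 n (M i) := boundedShifts_subset_iUnion _ _

end Shifts

section Retracts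

variable {𝒯 : Type u} [Category.{v} 𝒯]

lemma smd_mono {S S' : Set 𝒯} (hS : S ⊆ S') : smd 𝒯 S ⊆ smd 𝒯 S' :=
  fun _ ⟨Y, hY, hXY⟩ ↦ ⟨Y, hS hY, hXY⟩

lemma smd_iUnion {ι : Sort*} (S : ι → Set 𝒯) : smd 𝒯 (⋃ i, S i) = ⋃ i, smd 𝒯 (S i) := by
  refine subset_antisymm ?_ (Set.iUnion_subset fun i ↦ smd_mono (Set.subset_iUnion S i))
  rintro X ⟨Y, hY, hXY⟩
  obtain ⟨i, hi⟩ := Set.mem_iUnion.1 hY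
  exact Set.mem_iUnion.2 ⟨i, Y, hi, hXY⟩

end Retracts

section Extensions

variable {𝒯 : Type u} [Category.{v} 𝒯] [HasZeroObject 𝒯] [HasShift 𝒯 ℤ] [Preadditive 𝒯]
  [∀ n : ℤ, (shiftFunctor 𝒯 n).Additive] [Pretriangulated 𝒯]

namespace extClosure

lemma mono {U V : Set 𝒯} (hUV : U ⊆ V) {X : 𝒯} (hX : extClosure 𝒯 U X) : extClosure 𝒯 V X := by
  induction hX with
  | of hX => exact .of (hUV hX)
  | zero hX => exact .zero hX
  | ext f g h hT _ _ ihX ihZ => exact .ext f g h hT ihX ihZ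

lemma exists_of_iUnion {ι : Type*} [Nonempty ι] {U : ι → Set 𝒯} (hU : Directed (· ⊆ ·) U) {X : 𝒯}
    (hX : extClosure 𝒯 (⋃ i, U i) X) : ∃ i, extClosure 𝒯 (U i) X := by
  induction hX with
  | of hX =>
    obtain ⟨i, hi⟩ := Set.mem_iUnion.1 hX
    exact ⟨i, .of hi⟩
  | zero hX => exact ⟨Classical.arbitrary ι, .zero hX⟩
  | ext f g h hT _ _ ihX ihZ =>
    obtain ⟨i, hi⟩ := ihX
    obtain ⟨j, hj⟩ := ihZ
    obtain ⟨k, hik, hjk⟩ := hU i j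
    exact ⟨k, .ext f g h hT (hi.mono hik) (hj.mono hjk)⟩

end extClosure

lemma setOf_extClosure_iUnion {ι : Type*} [Nonempty ι] {U : ι → Set 𝒯}
    (hU : Directed (· ⊆ ·) U) :
    {X | extClosure 𝒯 (⋃ i, U i) X} = ⋃ i, {X | extClosure 𝒯 (U i) X} := by
  refine subset_antisymm (fun X hX ↦ Set.mem_iUnion.2 (extClosure.exists_of_iUnion hU hX)) ?_
  exact Set.iUnion_subset fun i X hX ↦ extClosure.mono (Set.subset_iUnion U i) hX

lemma gIic_mono (G : ℤ → Set 𝒯) : Monotone (gIic 𝒯 G) :=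
  fun _ _ hab ↦ smd_mono fun _ hX ↦ hX.mono (Set.monotone_accumulate hab)

lemma iUnion_gIic (G : ℤ → Set 𝒯) :
    ⋃ b, gIic 𝒯 G b = smd 𝒯 {X | extClosure 𝒯 (unionAll 𝒯 G) X} := by
  have hG : unionAll 𝒯 G = ⋃ b, unionIic 𝒯 G b := Set.iUnion_accumulate.symm
  have hdir : Directed (· ⊆ ·) (unionIic 𝒯 G) := Set.monotone_accumulate.directed_le
  rw [hG, setOf_extClosure_iUnion hdir, smd_iUnion]
  rfl

lemma MG_antitone (G : ℤ → Set 𝒯) : Antitone (MG 𝒯 G) :=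
  fun _ _ hij ↦ gIic_mono G (neg_le_neg hij)

lemma iUnion_MG (G : ℤ → Set 𝒯) :
    ⋃ i, MG 𝒯 G i = smd 𝒯 {X | extClosure 𝒯 (unionAll 𝒯 G) X} :=
  ((Equiv.neg ℤ).surjective.iUnion_comp (gIic 𝒯 G)).trans (iUnion_gIic G)

end Extensions

lemma sigmaDesc_ι_comp_sigmaComparison {𝒞 𝒟 : Type*} [Category* 𝒞] [Category* 𝒟] (K : 𝒞 ⥤ 𝒟)
    {α β : Type*} (f : α → 𝒞) (p : β → α) [HasCoproduct f] [HasCoproduct fun b ↦ f (p b)]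
    [HasCoproduct fun a ↦ K.obj (f a)] [HasCoproduct fun b ↦ K.obj (f (p b))] :
    Sigma.desc (fun b ↦ Sigma.ι (fun a ↦ K.obj (f a)) (p b)) ≫ sigmaComparison K f =
      sigmaComparison K (fun b ↦ f (p b)) ≫ K.map (Sigma.desc fun b ↦ Sigma.ι f (p b)) := by
  rw [sigmaComparison_map_desc]
  refine Sigma.hom_ext _ _ fun b ↦ ?_
  rw [Sigma.ι_desc_assoc, ι_comp_sigmaComparison, Sigma.ι_desc]

section Compacts

variable {𝒯 : Type u} [Category.{v} 𝒯] [HasZeroObject 𝒯] [HasShift 𝒯 ℤ] [Preadditive 𝒯]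
  [∀ n : ℤ, (shiftFunctor 𝒯 n).Additive] [Pretriangulated 𝒯] [HasCoproducts.{v} 𝒯]

lemma IsCompactObj.of_retract {X Y : 𝒯} (r : Retract X Y) (hY : IsCompactObj 𝒯 Y) :
    IsCompactObj 𝒯 X := by
  intro α f g
  obtain ⟨s, h, hg⟩ := hY α f (r.r ≫ g)
  exact ⟨s, r.i ≫ h, by rw [Category.assoc, ← hg, r.retract_assoc]⟩

lemma IsCompactObj.leftAdjoint_obj {𝒯' : Type*} [Category.{v} 𝒯'] [HasZeroObject 𝒯']
    [HasShift 𝒯' ℤ] [Preadditive 𝒯'] [∀ n : ℤ, (shiftFunctor 𝒯' n).Additive] [Pretriangulated 𝒯']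
    [HasCoproducts.{v} 𝒯'] {F : 𝒯 ⥤ 𝒯'} {K : 𝒯' ⥤ 𝒯} (adj : F ⊣ K)
    [∀ α : Type v, PreservesColimitsOfShape (Discrete α) K] {X : 𝒯} (hX : IsCompactObj 𝒯 X) :
    IsCompactObj 𝒯' (F.obj X) := by
  intro α f g
  obtain ⟨s, h, hg⟩ := hX α (fun a ↦ K.obj (f a)) (adj.homEquiv _ _ g ≫ inv (sigmaComparison K f))
  let f' : {a // a ∈ s} → 𝒯' := fun i ↦ f i.1
  refine ⟨s, (adj.homEquiv _ _).symm (h ≫ sigmaComparison K f'), (adj.homEquiv _ _).injective ?_⟩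
  calc adj.homEquiv _ _ g
      = h ≫ Sigma.desc (fun i : {a // a ∈ s} ↦ Sigma.ι (fun a ↦ K.obj (f a)) i.1) ≫
          sigmaComparison K f := by
        rw [← Category.assoc, ← IsIso.comp_inv_eq, hg]
    _ = (h ≫ sigmaComparison K f') ≫ K.map (Sigma.desc fun i ↦ Sigma.ι f i.1) := by
        rw [sigmaDesc_ι_comp_sigmaComparison, Category.assoc]
    _ = adj.homEquiv _ _ ((adj.homEquiv _ _).symm (h ≫ sigmaComparison K f') ≫
          Sigma.desc fun i ↦ Sigma.ι f i.1) := by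
        rw [Adjunction.homEquiv_naturality_right, Equiv.apply_symm_apply]

lemma shiftSet_compacts_subset (n : ℤ) : shiftSet 𝒯 n (compacts 𝒯) ⊆ compacts 𝒯 := by
  rintro X ⟨Y, hY, ⟨e⟩⟩
  have hYn : IsCompactObj 𝒯 (Y⟦n⟧) := hY.leftAdjoint_obj (shiftEquiv 𝒯 n).toAdjunction
  exact hYn.of_retract (.ofIso e)

lemma IsPreGenSeq.iUnion_MG {G : ℤ → Set 𝒯} (hG : IsPreGenSeq 𝒯 G) :
    ⋃ i, MG 𝒯 G i = compacts 𝒯 :=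
  (GApprox.iUnion_MG G).trans hG.generates

end Compacts

theorem statement_1_general (G : ℤ → Set C) (A : ℤ) (hG : IsPreGenSeq C G)
    (h : ∀ i : ℤ, MG C G i ⊆ ⋃ n ∈ {n : ℤ | |n| ≤ A}, shiftSet C n (MG C G (i + 1))) :
    (∀ i j : ℤ, 0 < j →
      MG C G i ⊆ ⋃ n ∈ {n : ℤ | |n| ≤ j * A}, shiftSet C n (MG C G (i + j))) ∧
    ∀ i : ℤ, compacts C = ⋃ n : ℤ, shiftSet C n (MG C G i) := by
  refine ⟨fun i j hj ↦ ?_, fun i ↦ subset_antisymm ?_ ?_⟩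
  · lift j to ℕ using hj.le
    exact subset_boundedShifts_nat_mul h i j
  · rw [← hG.iUnion_MG]
    exact iUnion_subset_iUnion_shiftSet (MG_antitone G) h i
  · have hMG : MG C G i ⊆ compacts C := hG.iUnion_MG ▸ Set.subset_iUnion (MG C G) i
    exact Set.iUnion_subset fun n ↦ (shiftSet_mono n hMG).trans (shiftSet_compacts_subset n)

theorem statement_1 (G : ℤ → Set C) (A : ℤ)
    (hcg : CompactlyGenerated C) (hG : IsGenSeq C G) (hA : 0 < A)
    (h : ∀ i : ℤ, MG C G i ⊆ ⋃ n ∈ {n : ℤ | |n| ≤ A}, shiftSet C n (MG C G (i + 1))) :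
    (∀ i j : ℤ, 0 < j →
      MG C G i ⊆ ⋃ n ∈ {n : ℤ | |n| ≤ j * A}, shiftSet C n (MG C G (i + j))) ∧
    ∀ i : ℤ, compacts C = ⋃ n : ℤ, shiftSet C n (MG C G i) :=
  statement_1_general C G A hG.toIsPreGenSeq h

end GApprox
end

section
/- Let T be a compactly generated triangulated category with a pre-generating sequence G = {G^n}_{n∈ℤ} and an orthogonal metric R such that for every n ∈ ℤ one has Hom(G^n, R_i) = 0 for all sufficiently large i. Then for every compact object H of T, Hom(H, R_i) = 0 for all sufficiently large i. -/
namespace GApprox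

open CategoryTheory CategoryTheory.Limits CategoryTheory.Pretriangulated

universe w v u

variable (C : Type u) [Category.{v} C] [HasZeroObject C] [HasShift C ℤ]
  [Preadditive C] [∀ n : ℤ, (shiftFunctor C n).Additive] [Pretriangulated C]
  [HasCoproducts.{v} C]

section EventualOrthogonal

open Filter

variable {T : Type u} [Category.{v} T]

theorem smd_mono_s3 {A B : Set T} (hAB : A ⊆ B) : smd T A ⊆ smd T B :=
  fun _ ⟨Y, hY, hX⟩ => ⟨Y, hAB hY, hX⟩

variable [Preadditive T]

theorem mem_lOrth_iff_leftOrthogonal {A : Set T} {X : T} :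
    X ∈ lOrth T A ↔ ObjectProperty.leftOrthogonal (· ∈ A) X :=
  ⟨fun hX _ f ha => hX _ ha f, fun hX _ ha f => hX f ha⟩

theorem mem_lOrth_of_isZero {A : Set T} {X : T} (hX : IsZero X) : X ∈ lOrth T A :=
  fun _ _ f => hX.eq_of_src f 0

theorem smd_lOrth_subset (A : Set T) : smd T (lOrth T A) ⊆ lOrth T A := by
  rintro X ⟨Y, hY, i, r, hir⟩ a ha f
  calc
    f = (i ≫ r) ≫ f := by rw [hir, Category.id_comp]
    _ = i ≫ r ≫ f := Category.assoc i r f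
    _ = 0 := by rw [hY a ha (r ≫ f), comp_zero]

/-- The eventual left orthogonal of a family `R` of classes along a filter `l`: the objects `X` with
`Hom(X, R i) = 0` for `l`-almost all `i`. For `R` a metric and `l = atTop` these are the objects
with `Hom(X, R i) = 0` for all sufficiently large `i`. -/
def eventualLOrth {ι : Type w} (l : Filter ι) (R : ι → Set T) : Set T :=
  {X | ∀ᶠ i in l, X ∈ lOrth T (R i)}

variable {ι : Type w} {l : Filter ι} {R : ι → Set T}

theorem mem_eventualLOrth_of_isZero {X : T} (hX : IsZero X) : X ∈ eventualLOrth l R :=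
  Eventually.of_forall fun _ => mem_lOrth_of_isZero hX

theorem smd_eventualLOrth_subset : smd T (eventualLOrth l R) ⊆ eventualLOrth l R :=
  fun _ ⟨Y, hY, hX⟩ => hY.mono fun i hi => smd_lOrth_subset (R i) ⟨Y, hi, hX⟩

theorem unionAll_subset_eventualLOrth {G : ℤ → Set T}
    (hG : ∀ n : ℤ, ∀ᶠ i in l, homZero T (G n) (R i)) : unionAll T G ⊆ eventualLOrth l R :=
  Set.iUnion_subset fun n X hX => (hG n).mono fun _ hi => hi X hX

variable [HasZeroObject T] [HasShift T ℤ] [∀ n : ℤ, (shiftFunctor T n).Additive]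
  [Pretriangulated T]

theorem starSet_lOrth_subset (A : Set T) :
    starSet T (lOrth T A) (lOrth T A) ⊆ lOrth T A := by
  rintro Y ⟨X, Z, f, g, h, hT, hX, hZ⟩
  rw [mem_lOrth_iff_leftOrthogonal] at hX hZ ⊢
  exact ObjectProperty.ext_of_isTriangulatedClosed₂ _ _ hT hX hZ

theorem starSet_eventualLOrth_subset :
    starSet T (eventualLOrth l R) (eventualLOrth l R) ⊆ eventualLOrth l R :=
  fun _ ⟨X, Z, f, g, h, hT, hX, hZ⟩ => (hX.and hZ).mono fun i ⟨hXi, hZi⟩ =>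
    starSet_lOrth_subset (R i) ⟨X, Z, f, g, h, hT, hXi, hZi⟩

theorem extClosure_subset {S P : Set T} (hSP : S ⊆ P) (hzero : ∀ X, IsZero X → X ∈ P)
    (hstar : starSet T P P ⊆ P) : {X | extClosure T S X} ⊆ P := by
  intro X hX
  induction hX with
  | of hX => exact hSP hX
  | zero hX => exact hzero _ hX
  | ext f g h hT _ _ hX hZ => exact hstar ⟨_, _, f, g, h, hT, hX, hZ⟩

theorem statement_3_general {S : Set T} (hS : S ⊆ eventualLOrth l R) :
    smd T {X | extClosure T S X} ⊆ eventualLOrth l R :=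
  calc
    smd T {X | extClosure T S X} ⊆ smd T (eventualLOrth l R) :=
      smd_mono_s3 (extClosure_subset hS (fun _ => mem_eventualLOrth_of_isZero)
        starSet_eventualLOrth_subset)
    _ ⊆ eventualLOrth l R := smd_eventualLOrth_subset

end EventualOrthogonal

theorem statement_3 (G Rm : ℤ → Set C)
    (hcg : CompactlyGenerated C) (hG : IsPreGenSeq C G) (hR : IsOrthMetric C Rm)
    (hvan : ∀ n : ℤ, ∃ N : ℤ, ∀ i : ℤ, N ≤ i → homZero C (G n) (Rm i)) :
    ∀ H ∈ compacts C, ∃ N : ℤ, ∀ i : ℤ, N ≤ i → ∀ Y ∈ Rm i, ∀ f : H ⟶ Y, f = 0 := by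
  intro H hH
  have hG_vanish : unionAll C G ⊆ eventualLOrth Filter.atTop Rm :=
    unionAll_subset_eventualLOrth fun n => Filter.eventually_atTop.mpr (hvan n)
  exact Filter.eventually_atTop.mp (statement_3_general hG_vanish (hG.generates.ge hH))

end GApprox
end

section
/- Let T be a compactly generated triangulated category with a pre-generating sequence G = {G^n}_{n∈ℤ} and an extended good metric R such that for every n ∈ ℤ one has Hom(G^n, R_i) = 0 for all sufficiently large i. Then: (1) ∩_{i∈ℤ} R_i = {0}; and (2) if E_1 → E_2 → E_3 → ⋯ is a sequence in T with compatible maps to an object F such that for each n ∈ ℤ one has Cone(E_i → F) ∈ R_n for all sufficiently large i, then the non-canonical map Hocolim E_n → F is an isomorphism. -/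
namespace GApprox

open CategoryTheory CategoryTheory.Limits CategoryTheory.Pretriangulated

universe w v u

variable (C : Type u) [Category.{v} C] [HasZeroObject C] [HasShift C ℤ]
  [Preadditive C] [∀ n : ℤ, (shiftFunctor C n).Additive] [Pretriangulated C]
  [HasCoproducts.{v} C]

/-!
Everything is tested against compact objects `K`. The objects `K` with `Hom(K, Rᵢ) = 0` for `i ≫ 0`
are closed under extensions and direct summands, so they include all compacts as soon as they
include every `Gⁿ`; hence an object of `⋂ Rᵢ` receives no nonzero map from a compact object. For the
homotopy colimit, `1 - shift` is injective on `Hom(K, -)` when `K` is compact, so every map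
`K ⟶ Hocolim E` factors through `E n` for all large `n`. In the triangle `E n ⟶ F ⟶ D` both
`Hom(K, D)` and `Hom(ΣK, D)` vanish for large `n`, because `ΣK` is compact too, hence
`Hom(K, E n) ⟶ Hom(K, F)` is bijective; therefore so is `Hom(K, Hocolim E) ⟶ Hom(K, F)`.
-/

open Filter

section Triangles

variable {𝒯 : Type u} [Category.{v} 𝒯] [HasZeroObject 𝒯] [HasShift 𝒯 ℤ]
  [Preadditive 𝒯] [∀ n : ℤ, (shiftFunctor 𝒯 n).Additive] [Pretriangulated 𝒯]
  {X Y Z K : 𝒯} {f : X ⟶ Y} {g : Y ⟶ Z} {h : Z ⟶ X⟦(1 : ℤ)⟧}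

theorem exists_lift_of_shift_comp_injective (hT : Triangle.mk f g h ∈ distTriang 𝒯)
    (hinj : ∀ k : K⟦(-1 : ℤ)⟧ ⟶ X, k ≫ f = 0 → k = 0) (k : K ⟶ Z) :
    ∃ l : K ⟶ Y, l ≫ g = k := by
  suffices hkh : k ≫ h = 0 by
    obtain ⟨l, hl⟩ := Triangle.coyoneda_exact₃ _ hT k hkh
    exact ⟨l, hl.symm⟩
  obtain ⟨k', hk'⟩ := (shiftFunctor 𝒯 (1 : ℤ)).map_surjective
    ((shiftNegShift K (1 : ℤ)).hom ≫ k ≫ h)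
  have hk'f : k' ≫ f = 0 := by
    apply (shiftFunctor 𝒯 (1 : ℤ)).map_injective
    have h_f : h ≫ f⟦(1 : ℤ)⟧' = 0 := comp_distTriang_mor_zero₃₁ _ hT
    rw [Functor.map_comp, hk', Category.assoc, Category.assoc, h_f, comp_zero, comp_zero,
      Functor.map_zero]
  rw [hinj k' hk'f, Functor.map_zero] at hk'
  exact (cancel_epi (shiftNegShift K (1 : ℤ)).hom).1 (hk'.symm.trans comp_zero.symm)

theorem eq_zero_of_comp_eq_zero_of_shift_hom_eq_zero (hT : Triangle.mk f g h ∈ distTriang 𝒯)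
    (hZ : ∀ l : K⟦(1 : ℤ)⟧ ⟶ Z, l = 0) {k : K ⟶ X} (hk : k ≫ f = 0) : k = 0 := by
  have hkf : k⟦(1 : ℤ)⟧' ≫ f⟦(1 : ℤ)⟧' = 0 := by rw [← Functor.map_comp, hk, Functor.map_zero]
  obtain ⟨l, hl⟩ := Triangle.coyoneda_exact₁ _ hT (k⟦(1 : ℤ)⟧') hkf
  rw [hZ l] at hl
  exact (Functor.map_eq_zero_iff _).1 (hl.trans zero_comp)

theorem mem_lOrth_of_distTriang {A : Set 𝒯} (hT : Triangle.mk f g h ∈ distTriang 𝒯)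
    (hX : X ∈ lOrth 𝒯 A) (hZ : Z ∈ lOrth 𝒯 A) : Y ∈ lOrth 𝒯 A := by
  intro a ha k
  obtain ⟨l, hl⟩ := Triangle.yoneda_exact₂ _ hT k (hX a ha _)
  rw [hl, hZ a ha l]
  exact comp_zero

theorem eventually_mem_lOrth_of_extClosure {ι : Type*} {l : Filter ι} {U : Set 𝒯}
    {R : ι → Set 𝒯} (hU : ∀ K ∈ U, ∀ᶠ i in l, K ∈ lOrth 𝒯 (R i))
    (hK : extClosure 𝒯 U K) : ∀ᶠ i in l, K ∈ lOrth 𝒯 (R i) := by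
  induction hK with
  | of hX => exact hU _ hX
  | zero hX => exact .of_forall fun _ _ _ _ => hX.eq_of_src _ _
  | ext _ _ _ hT _ _ ihX ihZ =>
    filter_upwards [ihX, ihZ] with i hX hZ using mem_lOrth_of_distTriang hT hX hZ

theorem eventually_mem_lOrth_of_mem_smd_extClosure {ι : Type*} {l : Filter ι} {U : Set 𝒯}
    {R : ι → Set 𝒯} (hU : ∀ K ∈ U, ∀ᶠ i in l, K ∈ lOrth 𝒯 (R i))
    (hK : K ∈ smd 𝒯 {X | extClosure 𝒯 U X}) : ∀ᶠ i in l, K ∈ lOrth 𝒯 (R i) := by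
  obtain ⟨L, hL, s, r, hsr⟩ := hK
  filter_upwards [eventually_mem_lOrth_of_extClosure hU hL] with i hi a ha k
  rw [← Category.id_comp k, ← hsr, Category.assoc, hi a ha (r ≫ k), comp_zero]

end Triangles

section Telescope

variable {𝒜 : Type u} [Category.{v} 𝒜] [HasCoproducts.{v} 𝒜]

theorem seqCoprod_hom_ext {E : ℕ → 𝒜} {X : 𝒜} {a b : seqCoprod 𝒜 E ⟶ X}
    (h : ∀ n, seqInj 𝒜 E n ≫ a = seqInj 𝒜 E n ≫ b) : a = b :=
  Sigma.hom_ext _ _ fun n => h n.down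

variable [Preadditive 𝒜] (E : ℕ → 𝒜) (e : ∀ n, E n ⟶ E (n + 1))

/-- The projection of the coproduct of a sequence onto its `n`-th term. -/
noncomputable def seqProj (n : ℕ) : seqCoprod 𝒜 E ⟶ E n :=
  Sigma.π (fun n : ULift.{v} ℕ => E n.down) (ULift.up n)

theorem seqInj_seqProj_self (n : ℕ) : seqInj 𝒜 E n ≫ seqProj E n = 𝟙 (E n) :=
  Sigma.ι_π_eq_id (fun n : ULift.{v} ℕ => E n.down) _

theorem seqInj_seqProj_of_ne {m n : ℕ} (h : m ≠ n) : seqInj 𝒜 E m ≫ seqProj E n = 0 :=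
  Sigma.ι_π_of_ne (fun n : ULift.{v} ℕ => E n.down) (ULift.up_injective.ne h)

theorem seqInj_oneMinusShift (n : ℕ) :
    seqInj 𝒜 E n ≫ oneMinusShift 𝒜 E e = seqInj 𝒜 E n - e n ≫ seqInj 𝒜 E (n + 1) :=
  Sigma.ι_desc (fun n : ULift.{v} ℕ => seqInj 𝒜 E n.down - e n.down ≫ seqInj 𝒜 E (n.down + 1))
    (ULift.up n)

theorem oneMinusShift_seqProj_zero : oneMinusShift 𝒜 E e ≫ seqProj E 0 = seqProj E 0 := by
  refine seqCoprod_hom_ext fun n => ?_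
  rw [← Category.assoc, seqInj_oneMinusShift, Preadditive.sub_comp, Category.assoc,
    seqInj_seqProj_of_ne E n.succ_ne_zero, comp_zero, sub_zero]

theorem oneMinusShift_seqProj_succ (n : ℕ) :
    oneMinusShift 𝒜 E e ≫ seqProj E (n + 1) = seqProj E (n + 1) - seqProj E n ≫ e n := by
  refine seqCoprod_hom_ext fun m => ?_
  rw [← Category.assoc, seqInj_oneMinusShift, Preadditive.sub_comp, Preadditive.comp_sub,
    Category.assoc]
  congr 1
  rcases eq_or_ne m n with rfl | hmn
  · rw [seqInj_seqProj_self, ← Category.assoc, seqInj_seqProj_self, Category.comp_id,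
      Category.id_comp]
  · rw [seqInj_seqProj_of_ne E (by simpa using hmn), ← Category.assoc,
      seqInj_seqProj_of_ne E hmn, comp_zero, zero_comp]

variable {E e} {H : 𝒜} {π : seqCoprod 𝒜 E ⟶ H}

theorem seqInj_comp_eq_of_oneMinusShift_comp_eq_zero (hπ : oneMinusShift 𝒜 E e ≫ π = 0) (n : ℕ) :
    seqInj 𝒜 E n ≫ π = e n ≫ seqInj 𝒜 E (n + 1) ≫ π := by
  rw [← sub_eq_zero, ← Category.assoc (e n), ← Preadditive.sub_comp, ← seqInj_oneMinusShift,
    Category.assoc, hπ, comp_zero]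

theorem exists_comp_seqInj_comp_eq_of_le (hπ : oneMinusShift 𝒜 E e ≫ π = 0) {m n : ℕ}
    (hmn : m ≤ n) : ∃ t : E m ⟶ E n, t ≫ seqInj 𝒜 E n ≫ π = seqInj 𝒜 E m ≫ π := by
  induction n, hmn using Nat.le_induction with
  | base => exact ⟨𝟙 _, Category.id_comp _⟩
  | succ n _ ih =>
    obtain ⟨t, ht⟩ := ih
    refine ⟨t ≫ e n, ?_⟩
    rw [Category.assoc, ← seqInj_comp_eq_of_oneMinusShift_comp_eq_zero hπ, ht]

end Telescope

section CompactObjects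

variable {C}

theorem IsCompactObj.map_of_adjunction {L R : C ⥤ C} (adj : L ⊣ R)
    [∀ α : Type v, PreservesColimitsOfShape (Discrete α) R]
    {K : C} (hK : IsCompactObj C K) : IsCompactObj C (L.obj K) := by
  intro α f g
  obtain ⟨s, k, hk⟩ := hK α (fun i => R.obj (f i))
    (adj.homEquiv _ _ g ≫ inv (sigmaComparison R f))
  let incl : ∐ (fun i : {a : α // a ∈ s} => f i.1) ⟶ ∐ f := Sigma.desc fun i => Sigma.ι f i.1
  let k' := k ≫ sigmaComparison R fun i : {a : α // a ∈ s} => f i.1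
  have incl_comparison :
      Sigma.desc (fun i : {a : α // a ∈ s} => Sigma.ι (fun i => R.obj (f i)) i.1) ≫
        sigmaComparison R f = sigmaComparison R _ ≫ R.map incl := by
    ext i
    simp [incl]
  have factor : adj.homEquiv _ _ g = k' ≫ R.map incl := by
    rw [Category.assoc, ← incl_comparison, ← Category.assoc, ← hk, Category.assoc,
      IsIso.inv_hom_id, Category.comp_id]
  refine ⟨s, (adj.homEquiv _ _).symm k', ?_⟩
  rw [← adj.homEquiv_naturality_right_symm, ← factor, Equiv.symm_apply_apply]

theorem IsCompactObj.shift {K : C} (hK : IsCompactObj C K) (n : ℤ) :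
    IsCompactObj C (K⟦n⟧) :=
  hK.map_of_adjunction (shiftEquiv C n).toAdjunction

theorem IsCompactObj.exists_eq_sum {K : C} (hK : IsCompactObj C K)
    {α : Type v} [DecidableEq α] (f : α → C) (g : K ⟶ ∐ f) :
    ∃ s : Finset α, g = ∑ i ∈ s, (g ≫ Sigma.π f i) ≫ Sigma.ι f i := by
  obtain ⟨s, h, rfl⟩ := hK α f g
  refine ⟨s, ?_⟩
  simp only [Category.assoc]
  rw [← Preadditive.comp_sum]
  congr 1
  refine Sigma.hom_ext _ _ fun j => ?_
  rw [Sigma.ι_desc, Preadditive.comp_sum, Finset.sum_eq_single j.1]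
  · rw [Sigma.ι_desc_assoc, Sigma.ι_π_eq_id_assoc]
  · intro i _ hij
    rw [Sigma.ι_desc_assoc, Sigma.ι_π_of_ne_assoc _ hij.symm, zero_comp]
  · exact fun hj => (hj j.2).elim

theorem IsCompactObj.exists_eq_sum_seqInj {K : C} (hK : IsCompactObj C K) {E : ℕ → C}
    (x : K ⟶ seqCoprod C E) :
    ∃ s : Finset ℕ, x = ∑ n ∈ s, (x ≫ seqProj E n) ≫ seqInj C E n := by
  obtain ⟨s, hs⟩ := hK.exists_eq_sum (fun n : ULift.{v} ℕ => E n.down) x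
  exact ⟨s.map Equiv.ulift.toEmbedding, by rw [Finset.sum_map]; exact hs⟩

variable {E : ℕ → C} {e : ∀ n, E n ⟶ E (n + 1)}

theorem IsCompactObj.eq_zero_of_comp_oneMinusShift {K : C} (hK : IsCompactObj C K)
    {a : K ⟶ seqCoprod C E} (ha : a ≫ oneMinusShift C E e = 0) : a = 0 := by
  have comp_proj (n : ℕ) : a ≫ seqProj E n = 0 := by
    induction n with
    | zero => rw [← oneMinusShift_seqProj_zero E e, ← Category.assoc, ha, zero_comp]
    | succ n ih =>
      have h : a ≫ oneMinusShift C E e ≫ seqProj E (n + 1) = 0 := by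
        rw [← Category.assoc, ha, zero_comp]
      rwa [oneMinusShift_seqProj_succ, Preadditive.comp_sub, ← Category.assoc, ih, zero_comp,
        sub_zero] at h
  obtain ⟨s, hs⟩ := hK.exists_eq_sum_seqInj a
  rw [hs]
  exact Finset.sum_eq_zero fun n _ => by rw [comp_proj, zero_comp]

theorem IsCompactObj.eventually_exists_comp_seqInj_comp_eq {K H : C} {π : seqCoprod C E ⟶ H}
    (hK : IsCompactObj C K) (hπ : oneMinusShift C E e ≫ π = 0) (x : K ⟶ seqCoprod C E) :
    ∀ᶠ n in atTop, ∃ y : K ⟶ E n, y ≫ seqInj C E n ≫ π = x ≫ π := by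
  obtain ⟨s, hs⟩ := hK.exists_eq_sum_seqInj x
  rw [hs]
  refine Finset.sum_induction _
    (fun z : K ⟶ seqCoprod C E => ∀ᶠ n in atTop, ∃ y : K ⟶ E n, y ≫ seqInj C E n ≫ π = z ≫ π)
    (fun z z' hz hz' => ?add) ?zero (fun m _ => ?mem)
  case add =>
    filter_upwards [hz, hz'] with n ⟨y, hy⟩ ⟨y', hy'⟩
    exact ⟨y + y', by rw [Preadditive.add_comp, Preadditive.add_comp, hy, hy']⟩
  case zero => exact .of_forall fun n => ⟨0, by rw [zero_comp, zero_comp]⟩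
  case mem =>
    filter_upwards [eventually_ge_atTop m] with n hn
    obtain ⟨t, ht⟩ := exists_comp_seqInj_comp_eq_of_le hπ hn
    exact ⟨(x ≫ seqProj E m) ≫ t, by rw [Category.assoc, ht, Category.assoc _ _ π]⟩

end CompactObjects

section CompactlyGenerated

variable {C} {ι : Type*} {R : ι → Set C}

theorem CompactlyGenerated.isZero_of_forall_mem (hcg : CompactlyGenerated C)
    (hR : ∀ K ∈ compacts C, ∃ i, K ∈ lOrth C (R i)) {X : C} (hX : ∀ i, X ∈ R i) : IsZero X :=
  hcg X fun K hK f =>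
    let ⟨i, hi⟩ := hR K hK
    hi X (hX i) f

theorem CompactlyGenerated.isIso_of_bijective_on_compacts (hcg : CompactlyGenerated C)
    {X Y : C} {f : X ⟶ Y} (hinj : ∀ K ∈ compacts C, ∀ k : K ⟶ X, k ≫ f = 0 → k = 0)
    (hsurj : ∀ K ∈ compacts C, ∀ k : K ⟶ Y, ∃ l : K ⟶ X, l ≫ f = k) : IsIso f := by
  obtain ⟨Z, g, h, hT⟩ := distinguished_cocone_triangle f
  refine (Triangle.isZero₃_iff_isIso₁ _ hT).1 (hcg Z fun K hK k => ?_)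
  obtain ⟨l, rfl⟩ := exists_lift_of_shift_comp_injective hT
    (hinj _ (IsCompactObj.shift hK (-1))) k
  obtain ⟨m, rfl⟩ := hsurj K hK l
  have hfg : f ≫ g = 0 := comp_distTriang_mor_zero₁₂ _ hT
  rw [Category.assoc, hfg, comp_zero]

variable {E : ℕ → C} {e : ∀ n, E n ⟶ E (n + 1)} {H : C} {π : seqCoprod C E ⟶ H}
  {δ : H ⟶ (seqCoprod C E)⟦(1 : ℤ)⟧}

theorem IsHocolim.eventually_exists_factor (hH : IsHocolim C E e H π δ) {K : C}
    (hK : IsCompactObj C K) (k : K ⟶ H) :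
    ∀ᶠ n in atTop, ∃ y : K ⟶ E n, y ≫ seqInj C E n ≫ π = k := by
  obtain ⟨x, rfl⟩ := exists_lift_of_shift_comp_injective hH
    (fun _ => (hK.shift (-1)).eq_zero_of_comp_oneMinusShift) k
  exact hK.eventually_exists_comp_seqInj_comp_eq (comp_distTriang_mor_zero₁₂ _ hH) x

theorem IsHocolim.isIso_of_cone_mem (hH : IsHocolim C E e H π δ) (hcg : CompactlyGenerated C)
    (hR : ∀ K ∈ compacts C, ∃ i, K ∈ lOrth C (R i)) {F : C} {φ : ∀ n, E n ⟶ F}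
    (hcone : ∀ i, ∀ᶠ n in atTop, ∃ (D : C) (g : F ⟶ D) (d : D ⟶ (E n)⟦(1 : ℤ)⟧),
      Triangle.mk (φ n) g d ∈ distTriang C ∧ D ∈ R i)
    {h : H ⟶ F} (hh : ∀ n, seqInj C E n ≫ π ≫ h = φ n) : IsIso h := by
  refine hcg.isIso_of_bijective_on_compacts (fun K hK k hk => ?inj) (fun K hK k => ?surj)
  case inj =>
    obtain ⟨i, hi⟩ := hR _ (IsCompactObj.shift hK 1)
    obtain ⟨n, ⟨y, rfl⟩, D, g, d, hT, hD⟩ :=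
      ((hH.eventually_exists_factor hK k).and (hcone i)).exists
    have hyφ : y ≫ φ n = 0 := by simpa only [← hh, Category.assoc] using hk
    rw [eq_zero_of_comp_eq_zero_of_shift_hom_eq_zero hT (hi D hD) hyφ, zero_comp]
  case surj =>
    obtain ⟨i, hi⟩ := hR K hK
    obtain ⟨n, D, g, d, hT, hD⟩ := (hcone i).exists
    obtain ⟨l, hl⟩ : ∃ l : K ⟶ E n, k = l ≫ φ n :=
      Triangle.coyoneda_exact₂ _ hT k (hi D hD _)
    exact ⟨l ≫ seqInj C E n ≫ π, by rw [hl, ← hh, Category.assoc, Category.assoc]⟩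

end CompactlyGenerated

theorem statement_8_general (G Rm : ℤ → Set C) (hcg : CompactlyGenerated C)
    (hG : compacts C ⊆ smd C {X | extClosure C (unionAll C G) X})
    (hzero : ∀ (i : ℤ) (X : C), IsZero X → X ∈ Rm i)
    (hvan : ∀ n : ℤ, ∃ N : ℤ, ∀ i : ℤ, N ≤ i → homZero C (G n) (Rm i)) :
    ((⋂ i : ℤ, Rm i) = {X : C | IsZero X}) ∧
    ∀ (E : ℕ → C) (e : ∀ n, E n ⟶ E (n + 1)) (F : C) (φ : ∀ n, E n ⟶ F),
      (∀ m : ℤ, ∃ N : ℕ, ∀ i : ℕ, N ≤ i →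
        ∃ (D : C) (g : F ⟶ D) (h : D ⟶ (E i)⟦(1 : ℤ)⟧),
          Triangle.mk (φ i) g h ∈ (distTriang C) ∧ D ∈ Rm m) →
      ∀ (H : C) (π : seqCoprod C E ⟶ H) (δ : H ⟶ (seqCoprod C E)⟦(1 : ℤ)⟧),
        IsHocolim C E e H π δ →
        ∀ h : H ⟶ F, (∀ n, seqInj C E n ≫ π ≫ h = φ n) → IsIso h := by
  have hgen : ∀ K ∈ unionAll C G, ∀ᶠ i in atTop, K ∈ lOrth C (Rm i) := fun K hK => by
    obtain ⟨n, hn⟩ := Set.mem_iUnion.1 hK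
    obtain ⟨N, hN⟩ := hvan n
    filter_upwards [eventually_ge_atTop N] with i hi using hN i hi K hn
  have hcompact : ∀ K ∈ compacts C, ∃ i, K ∈ lOrth C (Rm i) := fun K hK =>
    (eventually_mem_lOrth_of_mem_smd_extClosure hgen (hG hK)).exists
  refine ⟨Set.Subset.antisymm ?_ ?_, ?_⟩
  · exact fun X hX => hcg.isZero_of_forall_mem hcompact (Set.mem_iInter.1 hX)
  · exact fun X hX => Set.mem_iInter.2 fun i => hzero i X hX
  · exact fun E e F φ hcone H π δ hH h hh =>
      hH.isIso_of_cone_mem hcg hcompact (fun m => eventually_atTop.2 (hcone m)) hh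

theorem statement_8 (G Rm : ℤ → Set C)
    (hcg : CompactlyGenerated C) (hG : IsPreGenSeq C G) (hR : IsExtGoodMetric C Rm)
    (hvan : ∀ n : ℤ, ∃ N : ℤ, ∀ i : ℤ, N ≤ i → homZero C (G n) (Rm i)) :
    ((⋂ i : ℤ, Rm i) = {X : C | IsZero X}) ∧
    ∀ (E : ℕ → C) (e : ∀ n, E n ⟶ E (n + 1)) (F : C) (φ : ∀ n, E n ⟶ F),
      (∀ n, e n ≫ φ (n + 1) = φ n) →
      (∀ m : ℤ, ∃ N : ℕ, ∀ i : ℕ, N ≤ i →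
        ∃ (D : C) (g : F ⟶ D) (h : D ⟶ (E i)⟦(1 : ℤ)⟧),
          Triangle.mk (φ i) g h ∈ (distTriang C) ∧ D ∈ Rm m) →
      ∀ (H : C) (π : seqCoprod C E ⟶ H) (δ : H ⟶ (seqCoprod C E)⟦(1 : ℤ)⟧),
        IsHocolim C E e H π δ →
        ∀ h : H ⟶ F, (∀ n, seqInj C E n ≫ π ≫ h = φ n) → IsIso h := by
  obtain ⟨hinter, hhocolim⟩ :=
    statement_8_general C G Rm hcg hG.generates.superset hR.zero_mem hvan
  exact ⟨hinter, fun E e F φ _ => hhocolim E e F φ⟩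

end GApprox
end
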